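/- Let α > 1/4 and let ψ₀ : ℝ → [0,1] be a smooth even function supported in [−2,2] with ψ₀ ≡ 1 on [−1,1]. Then there exist ε > 0 and C > 0 such that for all integers j ≥ k ≥ 0, all (x,y) ∈ 𝕋², and all t ∈ ℝ with 2^{−j} < |t| ≤ 2·2^{−j}, one has | Σ_{m∈ℤ∖{0}} Σ_{n∈ℤ} ψ₀²(m/2^k) e^{i[mx − t·sgn(m)m²]} ψ₀²(n/2^k) e^{i[ny − t·sgn(m)n²]} | ≤ C 2^j 2^{2αk} 2^{−εj}. -/

import Mathlib

/-!
Write `N = 2^k` and `J = 2^j`, so that `N ≤ J` and `|t| ∼ 1/J`. On each of the half-planes `m > 0`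
and `m < 0` the sign of `m` is constant, and the kernel factors into a product of two
one-dimensional quadratic Weyl sums at scale `N` (with `t` replaced by `-t` when `m < 0`). It is
enough to bound each factor by `O(N^{1/4} J^{3/8})`: the kernel is then
`O(N^{1/2} J^{3/4}) ≤ O(N^{2α} J^{1 - 1/4})`, and `ε = 1/4` works.

For an unweighted sum of `n ≤ J/2 + 1` terms, Weyl differencing (`sq_norm_sum_le`) bounds its square
by `∑_h |∑_b e^{-2ithb}|`. The inner geometric sum is at most `n` and, because `|th| ≤ 1`, also at
most `2J/h` (`norm_geom_le`). Interpolating, it is at most `n^{1/4} (2J/h)^{3/4}`, and summing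
`h^{-3/4}` gives `O(n^{1/2} J^{3/4})` for the square (`short_sum_sq`); the interpolation avoids a
logarithm. An interval of `4N + 1 = O(J)` integers splits into boundedly many such blocks
(`long_sum`), and the cutoff, being Lipschitz at scale `N`, is inserted by Abel summation
(`abel_bound`, `weighted_sum`).
-/

open Complex MeasureTheory Filter Topology Set
open scoped Real BigOperators ENNReal

noncomputable section

/-- A (distributional) function on the torus `𝕋² = ℝ²/(2πℤ)²` is represented by its
sequence of Fourier coefficients, indexed by `ℤ × ℤ`. -/
abbrev CoefSeq : Type := ℤ × ℤ → ℂ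

/-- Squared `L²(𝕋²)` norm, via Parseval's identity. -/
def l2NormSq (a : CoefSeq) : ℝ := ∑' mn : ℤ × ℤ, ‖a mn‖ ^ 2

/-- The `L²(𝕋²)` norm. -/
def l2Norm (a : CoefSeq) : ℝ := Real.sqrt (l2NormSq a)

/-- The Sobolev weight `(1 + m² + n²)^s`. -/
def sobWeight (s : ℝ) (mn : ℤ × ℤ) : ℝ :=
  (1 + (mn.1 : ℝ) ^ 2 + (mn.2 : ℝ) ^ 2) ^ s

/-- Squared `H^s(𝕋²)` norm: `Σ (1+m²+n²)^s |ĝ(m,n)|²`. -/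
def hsNormSq (s : ℝ) (a : CoefSeq) : ℝ := ∑' mn : ℤ × ℤ, sobWeight s mn * ‖a mn‖ ^ 2

/-- The `H^s(𝕋²)` norm. -/
def hsNorm (s : ℝ) (a : CoefSeq) : ℝ := Real.sqrt (hsNormSq s a)

/-- Membership in `H^s(𝕋²)`. -/
def InHs (s : ℝ) (a : CoefSeq) : Prop :=
  Summable (fun mn : ℤ × ℤ => sobWeight s mn * ‖a mn‖ ^ 2)

/-- Membership in `H^∞(𝕋²) = ∩_{s ≥ 0} H^s(𝕋²)`. -/
def InHinf (a : CoefSeq) : Prop := ∀ s : ℝ, 0 ≤ s → InHs s a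

/-- The (2π-periodic) function on `ℝ²` represented by the coefficients `a`. -/
def toFun (a : CoefSeq) (x y : ℝ) : ℂ :=
  ∑' mn : ℤ × ℤ, a mn * Complex.exp (Complex.I * ((mn.1 : ℂ) * x + (mn.2 : ℂ) * y))

/-- The `L^∞(𝕋²)` norm of the function represented by `a`. -/
def supNorm (a : CoefSeq) : ℝ := ⨆ p : ℝ × ℝ, ‖toFun a p.1 p.2‖

/-- Fourier multiplier of `∂ₓ`: `(∂ₓf)^(m,n) = i·m·f̂(m,n)`. -/
def dxOp (a : CoefSeq) : CoefSeq := fun mn => Complex.I * (mn.1 : ℂ) * a mn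

/-- Fourier multiplier of `∂_y`: `(∂_yf)^(m,n) = i·n·f̂(m,n)`. -/
def dyOp (a : CoefSeq) : CoefSeq := fun mn => Complex.I * (mn.2 : ℂ) * a mn

/-- The `L^∞(𝕋²)` norm of the spatial gradient `∇f = (∂ₓf, ∂_yf)`. -/
def gradSupNorm (a : CoefSeq) : ℝ :=
  ⨆ p : ℝ × ℝ, Real.sqrt (‖toFun (dxOp a) p.1 p.2‖ ^ 2 + ‖toFun (dyOp a) p.1 p.2‖ ^ 2)

/-- Fourier multiplier of `𝓗Δ`, where `(𝓗f)^(m,n) = -i·sgn(m)·f̂(m,n)` (zero for `m = 0`)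
and `(Δf)^(m,n) = -(m²+n²)·f̂(m,n)`; hence `(𝓗Δf)^(m,n) = i·sgn(m)·(m²+n²)·f̂(m,n)`. -/
def hilbertLap (a : CoefSeq) : CoefSeq := fun mn =>
  Complex.I * (mn.1.sign : ℂ) * (((mn.1 : ℝ) ^ 2 + (mn.2 : ℝ) ^ 2 : ℝ) : ℂ) * a mn

/-- Fourier coefficients of a product of two functions on the torus (convolution). -/
def convOp (a b : CoefSeq) : CoefSeq := fun mn => ∑' pq : ℤ × ℤ, a pq * b (mn - pq)

/-- The function represented by `a` is real-valued. -/
def RealCoef (a : CoefSeq) : Prop := ∀ mn : ℤ × ℤ, a (-mn) = starRingEnd ℂ (a mn)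

/-- `∫₀^{2π} f(x,y) dx = 0` for a.e. `y ∈ 𝕋`. -/
def ZeroXMean (a : CoefSeq) : Prop := ∀ n : ℤ, a (0, n) = 0

/-- `u` solves `u_t + 𝓗Δu + u·uₓ = 0` on the time set `D`, coefficientwise
(i.e. in the sense of distributions on the torus). -/
def IsSolutionOn (D : Set ℝ) (u : ℝ → CoefSeq) : Prop :=
  ∀ t ∈ D, ∀ mn : ℤ × ℤ,
    HasDerivWithinAt (fun τ => u τ mn)
      (-(hilbertLap (u t) mn) - convOp (u t) (dxOp (u t)) mn) D t

/-- Continuity of `u : D → H^s(𝕋²)`. -/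
def ContHsOn (s : ℝ) (D : Set ℝ) (u : ℝ → CoefSeq) : Prop :=
  ∀ t₀ ∈ D, Tendsto (fun t => hsNorm s (fun mn => u t mn - u t₀ mn))
    (nhdsWithin t₀ D) (nhds 0)

/-- `ψ : ℝ → [0,1]` is a smooth even cutoff, supported in `[-2,2]` and `≡ 1` on `[-1,1]`. -/
def IsCutoff (ψ : ℝ → ℝ) : Prop :=
  ContDiff ℝ (⊤ : ℕ∞) ψ ∧ (∀ x, ψ x ∈ Set.Icc (0:ℝ) 1) ∧ (∀ x, ψ (-x) = ψ x) ∧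
  (∀ x, 2 < |x| → ψ x = 0) ∧ (∀ x ∈ Set.Icc (-1:ℝ) 1, ψ x = 1)

/-! ### Weyl differencing and geometric sums -/

/-- Weyl differencing: the square of a sum is controlled by its correlations at each shift `h`.
The factor `2` accounts for the pairs with `a < b`, which are conjugate to those with `b < a`. -/
lemma sq_norm_sum_le (f : ℕ → ℂ) (n : ℕ) :
    ‖∑ a ∈ Finset.range n, f a‖ ^ 2 ≤
      2 * ∑ h ∈ Finset.range n,
        ‖∑ b ∈ Finset.range (n - h), f (b + h) * (starRingEnd ℂ) (f b)‖ := by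
  -- Keep only the pairs `(a, a - h)`; the diagonal is counted twice, which is harmless.
  have key : ∀ n : ℕ, ‖∑ a ∈ Finset.range n, f a‖ ^ 2 ≤
      2 * (∑ a ∈ Finset.range n, ∑ h ∈ Finset.range (a + 1),
        f a * (starRingEnd ℂ) (f (a - h))).re := by
    intro n
    induction n with
    | zero => simp
    | succ n ih =>
      rw [Finset.sum_range_succ, Finset.sum_range_succ _ n, Complex.add_re]
      have h1 : ∑ h ∈ Finset.range (n + 1), f n * (starRingEnd ℂ) (f (n - h))
          = f n * (starRingEnd ℂ) (∑ a ∈ Finset.range n, f a)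
            + f n * (starRingEnd ℂ) (f n) := by
        rw [map_sum, ← mul_add, ← Finset.sum_range_succ (fun a => (starRingEnd ℂ) (f a)),
          Finset.mul_sum,
          ← Finset.sum_range_reflect (fun a => f n * (starRingEnd ℂ) (f a))]
        apply Finset.sum_congr rfl
        intro h _
        simp
      rw [h1]
      generalize (∑ a ∈ Finset.range n, f a) = G at *
      simp only [← Complex.normSq_eq_norm_sq, Complex.normSq_apply, Complex.add_re,
        Complex.add_im, Complex.mul_re, Complex.conj_re, Complex.conj_im] at *
      nlinarith [mul_self_nonneg (f n).re, mul_self_nonneg (f n).im]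
  -- Regroup the pairs according to the shift `h`.
  have flip := Finset.sum_range_diag_flip n
    (fun h b => f (b + h) * (starRingEnd ℂ) (f b))
  have e : ∑ a ∈ Finset.range n, ∑ h ∈ Finset.range (a + 1),
        f a * (starRingEnd ℂ) (f (a - h)) = ∑ h ∈ Finset.range n,
          ∑ b ∈ Finset.range (n - h), f (b + h) * (starRingEnd ℂ) (f b) := by
    rw [← flip]
    refine Finset.sum_congr rfl fun a _ => Finset.sum_congr rfl fun h hh => ?_
    have : a - h + h = a := by have := Finset.mem_range.1 hh; omega
    simp only [this]
  refine (key n).trans ?_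
  rw [e]
  have := (Complex.re_le_norm (∑ h ∈ Finset.range n,
          ∑ b ∈ Finset.range (n - h), f (b + h) * (starRingEnd ℂ) (f b))).trans (norm_sum_le _ _)
  linarith

/-- The quadratic phase `e^{i(sx - ts²)}`. -/
def qphase (x t s : ℝ) : ℂ := Complex.exp (Complex.I * ((s * x - t * s ^ 2 : ℝ) : ℂ))

lemma norm_qphase (x t s : ℝ) : ‖qphase x t s‖ = 1 := by
  rw [qphase, mul_comm, Complex.norm_exp_ofReal_mul_I]

/-- Translating the frequency variable only changes `x` (and a unimodular factor), so bounds
uniform in `x` apply to sums over every interval. -/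
lemma qphase_add (x t s r : ℝ) :
    qphase x t (s + r) = qphase x t s * qphase (x - 2 * t * s) t r := by
  simp only [qphase, ← Complex.exp_add]
  congr 1
  push_cast
  ring

/-- The correlation of the quadratic phase at shift `h` is geometric in `b`. -/
lemma qphase_mul_conj (x t : ℝ) (b h : ℕ) :
    qphase x t ((b + h : ℕ) : ℝ) * (starRingEnd ℂ) (qphase x t (b : ℝ)) =
      qphase x t h * Complex.exp (Complex.I * ((-2 * t * h : ℝ) : ℂ)) ^ b := by
  simp only [qphase, ← Complex.exp_conj, ← Complex.exp_add, ← Complex.exp_nat_mul, map_mul,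
    Complex.conj_I, Complex.conj_ofReal]
  congr 1
  push_cast
  ring

lemma norm_geom_le (θ : ℝ) (hθ : |θ| ≤ π / 2) (hθ0 : θ ≠ 0) (n : ℕ) :
    ‖∑ b ∈ Finset.range n, Complex.exp (Complex.I * ((-2 * θ : ℝ) : ℂ)) ^ b‖ ≤ 2 / |θ| := by
  set z := Complex.exp (Complex.I * ((-2 * θ : ℝ) : ℂ)) with hz
  have hz1 : ‖z‖ = 1 := by rw [hz, mul_comm, Complex.norm_exp_ofReal_mul_I]
  have h1 : ‖z - 1‖ = 2 * |Real.sin θ| := by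
    rw [hz, Complex.norm_exp_I_mul_ofReal_sub_one]
    rw [show (-2 * θ) / 2 = -θ by ring, Real.sin_neg]
    simp
  have h2 : ‖∑ b ∈ Finset.range n, z ^ b‖ * ‖z - 1‖ ≤ 2 := by
    rw [← norm_mul, geom_sum_mul]
    refine (norm_sub_le _ _).trans ?_
    rw [norm_pow, hz1]; norm_num
  have h3 := Real.mul_abs_le_abs_sin hθ
  have hpos : 0 < |θ| := abs_pos.2 hθ0
  rw [le_div_iff₀ hpos]
  have h4 : |θ| ≤ ‖z - 1‖ := by
    rw [h1]
    have : 1 / 2 ≤ 2 / π := by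
      rw [div_le_div_iff₀ (by norm_num) Real.pi_pos]; linarith [Real.pi_le_four]
    nlinarith
  exact (mul_le_mul_of_nonneg_left h4 (norm_nonneg _)).trans h2

/-- Interpolation of the two bounds `a ≤ u⁴` and `a ≤ (v/s)⁴`. -/
lemma interp_le {a u v s : ℝ} (hu : 0 ≤ u) (hv : 0 ≤ v) (hs : 0 < s)
    (h1 : a ≤ u ^ 4) (h2 : a ≤ (v / s) ^ 4) : a ≤ u * v ^ 3 * (1 / s ^ 3) := by
  have hw : 0 ≤ v / s := by positivity
  have e : u * v ^ 3 * (1 / s ^ 3) = u * (v / s) ^ 3 := by rw [div_pow]; ring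
  rw [e]
  rcases le_total u (v / s) with h | h
  · calc a ≤ u * u ^ 3 := by linarith [h1]
      _ ≤ _ := by gcongr
  · calc a ≤ (v / s) * (v / s) ^ 3 := by linarith [h2]
      _ ≤ _ := by gcongr

lemma rpow_quarter_pow {r : ℝ} (hr : 0 ≤ r) : (r ^ (1 / 4 : ℝ)) ^ 4 = r := by
  rw [← Real.rpow_natCast, ← Real.rpow_mul hr]; norm_num

/-- `∑_{h=1}^n h^{-3/4} ≤ 4 n^{1/4}`, by telescoping. -/
lemma sum_inv_le (n : ℕ) :
    ∑ h ∈ Finset.range n, 1 / (((h + 1 : ℕ) : ℝ) ^ (1 / 4 : ℝ)) ^ 3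
      ≤ 4 * (n : ℝ) ^ (1 / 4 : ℝ) := by
  induction n with
  | zero => simp
  | succ n ih =>
    rw [Finset.sum_range_succ]
    have hb : 0 ≤ (n : ℝ) ^ (1 / 4 : ℝ) := by positivity
    have ha : 0 < ((n + 1 : ℕ) : ℝ) ^ (1 / 4 : ℝ) := by positivity
    have hab : (n : ℝ) ^ (1 / 4 : ℝ) ≤ ((n + 1 : ℕ) : ℝ) ^ (1 / 4 : ℝ) := by
      gcongr; omega
    have e1 := rpow_quarter_pow (Nat.cast_nonneg (α := ℝ) n)
    have e2 := rpow_quarter_pow (Nat.cast_nonneg (α := ℝ) (n + 1))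
    generalize (n : ℝ) ^ (1 / 4 : ℝ) = b at *
    generalize ((n + 1 : ℕ) : ℝ) ^ (1 / 4 : ℝ) = a at *
    have e3 : a ^ 4 - b ^ 4 = 1 := by rw [e1, e2]; push_cast; ring
    have : 1 / a ^ 3 ≤ 4 * (a - b) := by
      rw [div_le_iff₀ (by positivity)]
      have f1 : b ^ 3 ≤ a ^ 3 := by gcongr
      have f2 : b ^ 2 * a ≤ a ^ 2 * a := by gcongr
      have f3 : b * a ^ 2 ≤ a * a ^ 2 := by gcongr
      have : (a - b) * (b ^ 3 + b ^ 2 * a + b * a ^ 2 + a ^ 3) ≤ (a - b) * (4 * a ^ 3) :=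
        mul_le_mul_of_nonneg_left (by nlinarith) (by linarith)
      nlinarith
    linarith

/-! ### Bounds for one-dimensional quadratic Weyl sums -/

/-- Quadratic Weyl sum over at most `J / 2 + 1` terms. The length restriction keeps the ratios
`e^{-2ith}`, `h < n`, within one period, so the geometric sum at shift `h` is at most
`min (n, 2J / h)`. -/
lemma short_sum_sq (J n : ℕ) (hJ : 1 ≤ J) (hn : 2 * n ≤ J + 2) (x t : ℝ)
    (ht1 : ((J : ℝ))⁻¹ < |t|) (ht2 : |t| ≤ 2 * ((J : ℝ))⁻¹) :
    ‖∑ a ∈ Finset.range n, qphase x t a‖ ^ 2 ≤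
      10 * ((n : ℝ) ^ (1 / 4 : ℝ)) ^ 2 * ((2 * J : ℝ) ^ (1 / 4 : ℝ)) ^ 3 := by
  have hJ' : (1 : ℝ) ≤ J := by exact_mod_cast hJ
  have hJ0 : (0 : ℝ) < J := by linarith
  have ht0 : 0 < |t| := lt_trans (by positivity) ht1
  rcases Nat.eq_zero_or_pos n with rfl | hn0
  · simp
  obtain ⟨p, rfl⟩ : ∃ p, n = p + 1 := ⟨n - 1, by omega⟩
  have hpJ : 2 * p ≤ J := by omega
  set u := ((p + 1 : ℕ) : ℝ) ^ (1 / 4 : ℝ) with hu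
  set v := (2 * J : ℝ) ^ (1 / 4 : ℝ) with hv
  have u0 : 0 ≤ u := by positivity
  have v0 : 0 ≤ v := by positivity
  have u4 : u ^ 4 = ((p + 1 : ℕ) : ℝ) := rpow_quarter_pow (by positivity)
  have v4 : v ^ 4 = 2 * J := rpow_quarter_pow (by positivity)
  have inner : ∀ h : ℕ, ‖∑ b ∈ Finset.range (p + 1 - h),
      qphase x t ((b + h : ℕ) : ℝ) * (starRingEnd ℂ) (qphase x t (b : ℝ))‖ =
      ‖∑ b ∈ Finset.range (p + 1 - h), Complex.exp (Complex.I * ((-2 * (t * h) : ℝ) : ℂ)) ^ b‖ := by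
    intro h
    simp_rw [qphase_mul_conj]
    rw [← Finset.mul_sum, norm_mul, norm_qphase, one_mul]
    simp only [mul_assoc]
  have triv : ∀ h : ℕ, ‖∑ b ∈ Finset.range (p + 1 - h),
      Complex.exp (Complex.I * ((-2 * (t * h) : ℝ) : ℂ)) ^ b‖ ≤ u ^ 4 := by
    intro h
    refine (norm_sum_le _ _).trans ?_
    have : ∀ b ∈ Finset.range (p + 1 - h),
        ‖Complex.exp (Complex.I * ((-2 * (t * h) : ℝ) : ℂ)) ^ b‖ = 1 := by
      intro b _
      rw [norm_pow, mul_comm, Complex.norm_exp_ofReal_mul_I, one_pow]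
    rw [Finset.sum_congr rfl this, u4]
    simp only [Finset.sum_const, Finset.card_range, nsmul_eq_mul, mul_one]
    exact_mod_cast Nat.sub_le _ _
  have main := sq_norm_sum_le (fun a : ℕ => qphase x t (a : ℝ)) (p + 1)
  simp only [inner] at main
  rw [Finset.sum_range_succ' (fun h : ℕ => ‖∑ b ∈ Finset.range (p + 1 - h),
    Complex.exp (Complex.I * ((-2 * (t * h) : ℝ) : ℂ)) ^ b‖) p] at main
  have each : ∀ h ∈ Finset.range p, ‖∑ b ∈ Finset.range (p + 1 - (h + 1)),
      Complex.exp (Complex.I * ((-2 * (t * ((h + 1 : ℕ) : ℝ)) : ℝ) : ℂ)) ^ b‖ ≤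
      u * v ^ 3 * (1 / (((h + 1 : ℕ) : ℝ) ^ (1 / 4 : ℝ)) ^ 3) := by
    intro h hh
    have hh' : h + 1 ≤ p := Finset.mem_range.1 hh
    have hpos : (0 : ℝ) < ((h + 1 : ℕ) : ℝ) := by positivity
    refine interp_le u0 v0 (by positivity) (triv (h + 1)) ?_
    rw [div_pow, v4, rpow_quarter_pow hpos.le]
    -- Since `h + 1 ≤ J / 2`, the half-angle stays in `[-1, 1]`.
    have h2 : |t * ((h + 1 : ℕ) : ℝ)| ≤ 1 := by
      rw [abs_mul, abs_of_pos hpos]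
      have : ((h + 1 : ℕ) : ℝ) ≤ J / 2 := by
        rw [le_div_iff₀ (by norm_num)]
        exact_mod_cast (by omega : (h + 1) * 2 ≤ J)
      calc |t| * ((h + 1 : ℕ) : ℝ) ≤ (2 * (J : ℝ)⁻¹) * (J / 2) := by gcongr
        _ = 1 := by field_simp
    have h3 : t * ((h + 1 : ℕ) : ℝ) ≠ 0 := mul_ne_zero (abs_pos.1 ht0) hpos.ne'
    refine (norm_geom_le _ (h2.trans (by linarith [Real.pi_gt_three])) h3 _).trans ?_
    rw [abs_mul, abs_of_pos hpos, ← div_div]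
    gcongr
    rw [div_le_iff₀ ht0]
    have := mul_lt_mul_of_pos_left ht1 hJ0
    rw [mul_inv_cancel₀ hJ0.ne'] at this
    nlinarith
  have s1 := Finset.sum_le_sum each
  rw [← Finset.mul_sum] at s1
  have s2 := sum_inv_le p
  have s3 : (p : ℝ) ^ (1 / 4 : ℝ) ≤ u := by rw [hu]; gcongr; omega
  have s4 : u * v ^ 3 * ∑ h ∈ Finset.range p, 1 / (((h + 1 : ℕ) : ℝ) ^ (1 / 4 : ℝ)) ^ 3 ≤
      u * v ^ 3 * (4 * u) := by
    gcongr; linarith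
  have huv : u ≤ v := by
    rw [hu, hv]
    gcongr
    exact_mod_cast (by omega : p + 1 ≤ 2 * J)
  -- The term `h = 0` is absorbed using `u ≤ v` and `1 ≤ v`.
  have s5 : u ^ 4 ≤ u ^ 2 * v ^ 3 := by
    have hv1 : 1 ≤ v := Real.one_le_rpow (by linarith) (by norm_num)
    calc u ^ 4 = u ^ 2 * u ^ 2 := by ring
      _ ≤ u ^ 2 * v ^ 2 := by gcongr
      _ ≤ u ^ 2 * v ^ 3 := by gcongr <;> first | exact hv1 | norm_num
  have s6 := triv 0
  nlinarith

/-- Square root of `short_sum_sq`, with the length replaced by an upper bound `P` so that blocks of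
different lengths share one estimate. -/
lemma short_sum (J n P : ℕ) (hJ : 1 ≤ J) (hn : 2 * n ≤ J + 2) (hP : n ≤ P) (x t : ℝ)
    (ht1 : ((J : ℝ))⁻¹ < |t|) (ht2 : |t| ≤ 2 * ((J : ℝ))⁻¹) :
    ‖∑ a ∈ Finset.range n, qphase x t a‖ ≤
      4 * (P : ℝ) ^ (1 / 4 : ℝ) * (2 * J : ℝ) ^ (3 / 8 : ℝ) := by
  have h := short_sum_sq J n hJ hn x t ht1 ht2
  apply le_of_sq_le_sq _ (by positivity)
  refine h.trans ?_
  have e : ((2 * J : ℝ) ^ (3 / 8 : ℝ)) ^ 2 = ((2 * J : ℝ) ^ (1 / 4 : ℝ)) ^ 3 := by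
    rw [← Real.rpow_natCast, ← Real.rpow_natCast, ← Real.rpow_mul (by positivity),
      ← Real.rpow_mul (by positivity)]
    norm_num
  rw [mul_pow, mul_pow, e]
  gcongr
  norm_num

/-- A sum covered by `q` short blocks; each block is a short sum with a shifted `x`. -/
lemma long_sum (J P : ℕ) (hJ : 1 ≤ J) (t : ℝ)
    (ht1 : ((J : ℝ))⁻¹ < |t|) (ht2 : |t| ≤ 2 * ((J : ℝ))⁻¹) (q : ℕ) :
    ∀ (n : ℕ) (x : ℝ), n ≤ q * (J / 2 + 1) → n ≤ P →
    ‖∑ a ∈ Finset.range n, qphase x t a‖ ≤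
      q * (4 * (P : ℝ) ^ (1 / 4 : ℝ) * (2 * J : ℝ) ^ (3 / 8 : ℝ)) := by
  induction q with
  | zero => intro n x hn _; obtain rfl : n = 0 := by omega
            simp
  | succ q ih =>
    intro n x hn hP
    rw [Nat.succ_mul] at hn
    obtain ⟨m, r, rfl, hm, hr⟩ : ∃ m r, n = m + r ∧ m ≤ J / 2 + 1 ∧ r ≤ q * (J / 2 + 1) :=
      ⟨min n (J / 2 + 1), n - min n (J / 2 + 1), by omega, by omega, by omega⟩
    rw [Finset.sum_range_add]
    have e : ∑ i ∈ Finset.range r, qphase x t ((m + i : ℕ) : ℝ) =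
        qphase x t m * ∑ i ∈ Finset.range r, qphase (x - 2 * t * m) t i := by
      rw [Finset.mul_sum]
      refine Finset.sum_congr rfl fun i _ => ?_
      rw [Nat.cast_add, qphase_add]
    have h1 := short_sum J m P hJ (by omega) (by omega) x t ht1 ht2
    have h2 := ih r (x - 2 * t * m) hr (by omega)
    rw [e]
    refine (norm_add_le _ _).trans ?_
    rw [norm_mul, norm_qphase]
    push_cast
    linarith

/-- Abel summation against a slowly varying weight. -/
lemma abel_bound (w : ℕ → ℝ) (f : ℕ → ℂ) (n : ℕ) (B δ : ℝ)
    (hf : ∀ m ≤ n, ‖∑ a ∈ Finset.range m, f a‖ ≤ B) (hw : |w n| ≤ 1)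
    (hd : ∀ i, |w (i + 1) - w i| ≤ δ) :
    ‖∑ a ∈ Finset.range n, (w a : ℂ) * f a‖ ≤ B * (1 + n * δ) := by
  have parts : ∀ n : ℕ, ∑ a ∈ Finset.range n, (w a : ℂ) * f a =
      (w n : ℂ) * (∑ a ∈ Finset.range n, f a) - ∑ i ∈ Finset.range n,
        ((w (i + 1) - w i : ℝ) : ℂ) * ∑ a ∈ Finset.range (i + 1), f a := by
    intro n
    induction n with
    | zero => simp
    | succ n ih =>
      rw [Finset.sum_range_succ, ih, Finset.sum_range_succ (fun i =>
        ((w (i + 1) - w i : ℝ) : ℂ) * ∑ a ∈ Finset.range (i + 1), f a), Finset.sum_range_succ f]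
      push_cast
      ring
  rw [parts]
  refine (norm_sub_le _ _).trans ?_
  have h1 : ‖(w n : ℂ) * (∑ a ∈ Finset.range n, f a)‖ ≤ 1 * B := by
    rw [norm_mul, Complex.norm_real]
    exact mul_le_mul hw (hf n le_rfl) (norm_nonneg _) (by norm_num)
  have h2 : ‖∑ i ∈ Finset.range n,
        ((w (i + 1) - w i : ℝ) : ℂ) * ∑ a ∈ Finset.range (i + 1), f a‖ ≤ n * (δ * B) := by
    refine (norm_sum_le_of_le
      (f := fun i => ((w (i + 1) - w i : ℝ) : ℂ) * ∑ a ∈ Finset.range (i + 1), f a)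
      (n := fun _ => δ * B) _ ?_).trans (by simp)
    intro i hi
    rw [norm_mul, Complex.norm_real]
    exact mul_le_mul (hd i) (hf _ (Finset.mem_range.1 hi)) (norm_nonneg _)
      ((abs_nonneg _).trans (hd i))
  linarith

/-! ### Sums weighted by a cutoff -/

lemma sum_Ico_int_eq (A : ℤ) (n : ℕ) (f : ℤ → ℂ) :
    ∑ m ∈ Finset.Ico A (A + n), f m = ∑ i ∈ Finset.range n, f (A + i) := by
  induction n with
  | zero => simp
  | succ n ih =>
    rw [Finset.sum_range_succ, ← ih]
    have : Finset.Ico A (A + ((n + 1 : ℕ) : ℤ)) = insert (A + (n : ℤ)) (Finset.Ico A (A + n)) := by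
      ext z; simp only [Finset.mem_Ico, Finset.mem_insert]; push_cast; omega
    rw [this, Finset.sum_insert (by simp), add_comm]

/-- One-dimensional weighted Weyl sum at scale `N ≤ J`: the weight `w (· / N)` has variation
`O(Λ)` over an interval of length `O(N)`, and such an interval splits into boundedly many blocks
of length `J / 2 + 1`. -/
lemma weighted_sum (w : ℝ → ℝ) (Λ : ℝ) (hΛ : 0 ≤ Λ) (hw1 : ∀ s, |w s| ≤ 1)
    (hwL : ∀ s r, |w s - w r| ≤ Λ * |s - r|)
    (J N : ℕ) (hN : 1 ≤ N) (hNJ : N ≤ J) (x t : ℝ)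
    (ht1 : ((J : ℝ))⁻¹ < |t|) (ht2 : |t| ≤ 2 * ((J : ℝ))⁻¹) (A : ℤ) (n : ℕ)
    (hn : n ≤ 4 * N + 1) :
    ‖∑ m ∈ Finset.Ico A (A + n), (w ((m : ℝ) / N) : ℂ) * qphase x t m‖ ≤
      64 * (1 + 5 * Λ) * ((N : ℝ) ^ (1 / 4 : ℝ) * (2 * J : ℝ) ^ (3 / 8 : ℝ)) := by
  have hN0 : (0 : ℝ) < N := by exact_mod_cast hN
  rw [sum_Ico_int_eq]
  have hB : ∀ m ≤ n, ‖∑ a ∈ Finset.range m, qphase x t ((A + a : ℤ) : ℝ)‖ ≤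
      64 * ((N : ℝ) ^ (1 / 4 : ℝ) * (2 * J : ℝ) ^ (3 / 8 : ℝ)) := by
    intro m hm
    have e : ∑ a ∈ Finset.range m, qphase x t ((A + a : ℤ) : ℝ) =
        qphase x t A * ∑ a ∈ Finset.range m, qphase (x - 2 * t * A) t a := by
      rw [Finset.mul_sum]
      refine Finset.sum_congr rfl fun i _ => ?_
      rw [Int.cast_add, Int.cast_natCast, qphase_add]
    rw [e, norm_mul, norm_qphase, one_mul]
    -- Eight blocks suffice, since `4 N + 1 ≤ 4 J + 1 ≤ 8 (J / 2 + 1)`. The length bound `16 N`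
    -- is chosen for its exact fourth root.
    refine (long_sum J (16 * N) (hN.trans hNJ) t ht1 ht2 8 m _ (by omega) (by omega)).trans ?_
    have : ((16 * N : ℕ) : ℝ) ^ (1 / 4 : ℝ) = 2 * (N : ℝ) ^ (1 / 4 : ℝ) := by
      push_cast
      rw [Real.mul_rpow (by norm_num) hN0.le, show (16 : ℝ) = 2 ^ (4 : ℝ) by norm_num,
        ← Real.rpow_mul (by norm_num)]
      norm_num
    rw [this]
    push_cast
    exact le_of_eq (by ring)
  refine (abel_bound (fun i => w (((A + i : ℤ) : ℝ) / N)) _ n _ (Λ / N) hB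
    (hw1 _) ?_).trans ?_
  · intro i
    refine (hwL _ _).trans (le_of_eq ?_)
    have : ((A + (i + 1 : ℕ) : ℤ) : ℝ) / N - ((A + i : ℤ) : ℝ) / N = 1 / N := by
      push_cast; ring
    rw [this, abs_of_pos (by positivity)]
    ring
  · have : (n : ℝ) * (Λ / N) ≤ 5 * Λ := by
      have h5 : (n : ℝ) ≤ 5 * N := by exact_mod_cast (by omega : n ≤ 5 * N)
      calc (n : ℝ) * (Λ / N) ≤ (5 * N) * (Λ / N) := by gcongr
        _ = 5 * Λ := by field_simp
    have h0 : 0 ≤ 64 * ((N : ℝ) ^ (1 / 4 : ℝ) * (2 * J : ℝ) ^ (3 / 8 : ℝ)) := by positivity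
    nlinarith

lemma cutoff_sq_lipschitz (ψ : ℝ → ℝ) (hψ : IsCutoff ψ) :
    ∃ Λ : ℝ, 0 ≤ Λ ∧ ∀ s r, |ψ s ^ 2 - ψ r ^ 2| ≤ Λ * |s - r| := by
  obtain ⟨h1, h2, -, h4, -⟩ := hψ
  have hc : HasCompactSupport (fun s => ψ s ^ 2) := by
    apply HasCompactSupport.intro (K := Set.Icc (-2 : ℝ) 2) isCompact_Icc
    intro x hx
    have : 2 < |x| := by
      by_contra! h
      exact hx (abs_le.1 h)
    simp [h4 x this]
  obtain ⟨K, hK⟩ := ContDiff.lipschitzWith_of_hasCompactSupport hc (h1.pow 2) (by simp)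
  refine ⟨K, K.2, fun s r => ?_⟩
  have := hK.dist_le_mul s r
  simpa [Real.dist_eq] using this

/-- **Estimate (3.7) in the proof of Lemma 3.1.** For `α > 1/4` there are `ε > 0` and
`C > 0` such that for all `j ≥ k ≥ 0`, `(x,y) ∈ 𝕋²` and `2^{-j} < |t| ≤ 2·2^{-j}`,
`|Σ_{m≠0,n} ψ₀²(m/2^k) e^{i[mx - t·sgn(m)m²]} ψ₀²(n/2^k) e^{i[ny - t·sgn(m)n²]}|
  ≤ C 2^j 2^{2αk} 2^{-εj}`. -/
theorem kernel_estimate (α : ℝ) (hα : 1/4 < α) (ψ : ℝ → ℝ) (hψ : IsCutoff ψ) :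
    ∃ ε > (0:ℝ), ∃ C > (0:ℝ), ∀ j k : ℕ, k ≤ j → ∀ x y t : ℝ,
      (((2:ℝ) ^ j))⁻¹ < |t| → |t| ≤ 2 * (((2:ℝ) ^ j))⁻¹ →
      ‖∑' mn : ℤ × ℤ,
          if mn.1 = 0 then 0 else
            ((ψ ((mn.1 : ℝ) / 2 ^ k)) ^ 2 * (ψ ((mn.2 : ℝ) / 2 ^ k)) ^ 2 : ℝ) *
              Complex.exp (Complex.I *
                (((mn.1 : ℝ) * x - t * (mn.1.sign : ℝ) * (mn.1 : ℝ) ^ 2 +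
                  (mn.2 : ℝ) * y - t * (mn.1.sign : ℝ) * (mn.2 : ℝ) ^ 2 : ℝ) : ℂ))‖ ≤
        C * 2 ^ j * ((2:ℝ) ^ k) ^ (2 * α) * ((2:ℝ) ^ j) ^ (-ε) := by
  obtain ⟨Λ, hΛ, hL⟩ := cutoff_sq_lipschitz ψ hψ
  obtain ⟨-, h01, -, hsupp, -⟩ := hψ
  have hw1 : ∀ s, |ψ s ^ 2| ≤ 1 := fun s => by
    rw [abs_of_nonneg (sq_nonneg _)]
    exact pow_le_one₀ (h01 s).1 (h01 s).2
  set D : ℝ := 64 * (1 + 5 * Λ) with hD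
  have hD0 : 0 < D := by positivity
  refine ⟨1 / 4, by norm_num, 4 * D ^ 2, by positivity, ?_⟩
  intro j k hkj x y t ht1 ht2
  have hN1 : 1 ≤ 2 ^ k := Nat.one_le_two_pow
  have hNJ : 2 ^ k ≤ 2 ^ j := Nat.pow_le_pow_right (by norm_num) hkj
  obtain ⟨N, hN⟩ : ∃ N : ℕ, N = 2 ^ k := ⟨_, rfl⟩
  obtain ⟨J, hJ⟩ : ∃ J : ℕ, J = 2 ^ j := ⟨_, rfl⟩
  have hNr : (2 : ℝ) ^ k = N := by rw [hN]; push_cast; rfl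
  have hJr : (2 : ℝ) ^ j = J := by rw [hJ]; push_cast; rfl
  rw [← hN] at hN1 hNJ
  rw [← hJ] at hNJ
  rw [hJr] at ht1 ht2
  simp only [hNr, hJr]
  have hN0 : (0 : ℝ) < N := by exact_mod_cast hN1
  have hN1r : (1 : ℝ) ≤ N := by exact_mod_cast hN1
  have hJ1r : (1 : ℝ) ≤ J := by exact_mod_cast hN1.trans hNJ
  set E : ℝ := (N : ℝ) ^ (1 / 4 : ℝ) * (2 * J : ℝ) ^ (3 / 8 : ℝ) with hE
  have hE0 : 0 ≤ E := by positivity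
  have hW := weighted_sum (fun s => ψ s ^ 2) Λ hΛ hw1 hL J N hN1 hNJ
  have ht1' : ((J : ℝ))⁻¹ < |-t| := by rwa [abs_neg]
  have ht2' : |-t| ≤ 2 * ((J : ℝ))⁻¹ := by rwa [abs_neg]
  -- On `m > 0` the phase has parameter `t`, on `m < 0` it has parameter `-t`.
  set Sp := Finset.Ico (1 : ℤ) (1 + (2 * N : ℕ)) with hSp
  set Sm := Finset.Ico (-(2 * N : ℕ) : ℤ) (-(2 * N : ℕ) + (2 * N : ℕ)) with hSm
  set T := Finset.Ico (-(2 * N : ℕ) : ℤ) (-(2 * N : ℕ) + (4 * N + 1 : ℕ)) with hT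
  have bp := hW x t ht1 ht2 1 (2 * N) (by omega)
  have bpn := hW y t ht1 ht2 (-(2 * N : ℕ)) (4 * N + 1) (by omega)
  have bm := hW x (-t) ht1' ht2' (-(2 * N : ℕ)) (2 * N) (by omega)
  have bmn := hW y (-t) ht1' ht2' (-(2 * N : ℕ)) (4 * N + 1) (by omega)
  rw [← hD, ← hE] at bp bpn bm bmn
  rw [← hSp] at bp
  rw [← hSm] at bm
  rw [← hT] at bpn bmn
  have out : ∀ m : ℤ, m ∉ T → ψ ((m : ℝ) / N) = 0 := by
    intro m hm
    apply hsupp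
    rw [abs_div, abs_of_pos hN0, lt_div_iff₀ hN0]
    have : 2 * (N : ℤ) < |m| := by
      rw [hT, Finset.mem_Ico] at hm
      rw [lt_abs]
      push_cast at hm
      omega
    exact_mod_cast this
  have hsplit : ∀ F : ℤ × ℤ → ℂ, (∀ mn : ℤ × ℤ, mn.1 = 0 → F mn = 0) →
      (∀ mn : ℤ × ℤ, mn.1 ∉ T → F mn = 0) → (∀ mn : ℤ × ℤ, mn.2 ∉ T → F mn = 0) →
      ∑' mn, F mn = ∑ m ∈ Sp, ∑ n ∈ T, F (m, n) + ∑ m ∈ Sm, ∑ n ∈ T, F (m, n) := by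
    intro F f0 f1 f2
    have hd : Disjoint Sp Sm := by
      rw [Finset.disjoint_left]
      intro z hz hz'
      rw [hSp, Finset.mem_Ico] at hz
      rw [hSm, Finset.mem_Ico] at hz'
      omega
    rw [← Finset.sum_union hd, ← Finset.sum_product']
    apply tsum_eq_sum
    rintro ⟨m, n⟩ h
    by_cases hm0 : m = 0
    · exact f0 _ hm0
    by_cases hm : m ∈ T
    · apply f2
      intro hn
      apply h
      rw [Finset.mem_product]
      refine ⟨?_, hn⟩
      simp only [hT, hSp, hSm, Finset.mem_union, Finset.mem_Ico] at hm ⊢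
      push_cast at hm ⊢
      omega
    · exact f1 _ hm
  rw [hsplit]
  rotate_left
  · intro mn h; simp [h]
  · intro mn h; simp [out _ h]
  · intro mn h; simp [out _ h]
  have ep : ∑ m ∈ Sp, ∑ n ∈ T, (if m = 0 then (0 : ℂ) else
            ((ψ ((m : ℝ) / N)) ^ 2 * (ψ ((n : ℝ) / N)) ^ 2 : ℝ) *
              Complex.exp (Complex.I *
                (((m : ℝ) * x - t * (m.sign : ℝ) * (m : ℝ) ^ 2 +
                  (n : ℝ) * y - t * (m.sign : ℝ) * (n : ℝ) ^ 2 : ℝ) : ℂ))) =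
      (∑ m ∈ Sp, ((ψ ((m : ℝ) / N) ^ 2 : ℝ) : ℂ) * qphase x t m) *
        ∑ n ∈ T, ((ψ ((n : ℝ) / N) ^ 2 : ℝ) : ℂ) * qphase y t n := by
    rw [Finset.sum_mul_sum]
    refine Finset.sum_congr rfl fun m hm => Finset.sum_congr rfl fun n _ => ?_
    have hm0 : 0 < m := by rw [hSp, Finset.mem_Ico] at hm; omega
    rw [if_neg hm0.ne', Int.sign_eq_one_of_pos hm0, mul_mul_mul_comm, qphase, qphase,
      ← Complex.exp_add, ← Complex.ofReal_mul, ← mul_add, ← Complex.ofReal_add]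
    congr 4
    push_cast
    ring
  have em : ∑ m ∈ Sm, ∑ n ∈ T, (if m = 0 then (0 : ℂ) else
            ((ψ ((m : ℝ) / N)) ^ 2 * (ψ ((n : ℝ) / N)) ^ 2 : ℝ) *
              Complex.exp (Complex.I *
                (((m : ℝ) * x - t * (m.sign : ℝ) * (m : ℝ) ^ 2 +
                  (n : ℝ) * y - t * (m.sign : ℝ) * (n : ℝ) ^ 2 : ℝ) : ℂ))) =
      (∑ m ∈ Sm, ((ψ ((m : ℝ) / N) ^ 2 : ℝ) : ℂ) * qphase x (-t) m) *
        ∑ n ∈ T, ((ψ ((n : ℝ) / N) ^ 2 : ℝ) : ℂ) * qphase y (-t) n := by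
    rw [Finset.sum_mul_sum]
    refine Finset.sum_congr rfl fun m hm => Finset.sum_congr rfl fun n _ => ?_
    have hm0 : m < 0 := by rw [hSm, Finset.mem_Ico] at hm; omega
    rw [if_neg hm0.ne, Int.sign_eq_neg_one_of_neg hm0, mul_mul_mul_comm, qphase, qphase,
      ← Complex.exp_add, ← Complex.ofReal_mul, ← mul_add, ← Complex.ofReal_add]
    congr 4
    push_cast
    ring
  rw [ep, em]
  have total : ∀ a b c d : ℂ, ‖a‖ ≤ D * E → ‖b‖ ≤ D * E → ‖c‖ ≤ D * E → ‖d‖ ≤ D * E →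
      ‖a * b + c * d‖ ≤ 2 * D ^ 2 * E ^ 2 := by
    intro a b c d ha hb hc hd
    refine (norm_add_le _ _).trans ?_
    rw [norm_mul, norm_mul]
    have h1 := mul_le_mul ha hb (norm_nonneg _) (by positivity)
    have h2 := mul_le_mul hc hd (norm_nonneg _) (by positivity)
    nlinarith
  refine (total _ _ _ _ bp bpn bm bmn).trans ?_
  -- The hypothesis on `α` enters only through `N^{1/2} ≤ N^{2α}`.
  have hE2 : E ^ 2 ≤ 2 * (J * (N : ℝ) ^ (2 * α) * (J : ℝ) ^ (-(1 / 4) : ℝ)) := by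
    have e1 : ((N : ℝ) ^ (1 / 4 : ℝ)) ^ 2 = (N : ℝ) ^ (1 / 2 : ℝ) := by
      rw [← Real.rpow_natCast, ← Real.rpow_mul hN0.le]; norm_num
    have e2 : ((2 * J : ℝ) ^ (3 / 8 : ℝ)) ^ 2 = (2 * J : ℝ) ^ (3 / 4 : ℝ) := by
      rw [← Real.rpow_natCast, ← Real.rpow_mul (by positivity)]; norm_num
    have e3 : (2 * J : ℝ) ^ (3 / 4 : ℝ) ≤ 2 * (J * (J : ℝ) ^ (-(1 / 4) : ℝ)) := by
      rw [Real.mul_rpow (by norm_num) (by positivity)]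
      have : (J : ℝ) * (J : ℝ) ^ (-(1 / 4) : ℝ) = (J : ℝ) ^ (3 / 4 : ℝ) := by
        rw [← Real.rpow_one_add' (by positivity) (by norm_num)]; norm_num
      rw [this]
      gcongr
      exact Real.rpow_le_self_of_one_le (by norm_num) (by norm_num)
    have e4 : (N : ℝ) ^ (1 / 2 : ℝ) ≤ (N : ℝ) ^ (2 * α) :=
      Real.rpow_le_rpow_of_exponent_le hN1r (by linarith)
    rw [hE, mul_pow, e1, e2]
    calc _ ≤ (N : ℝ) ^ (2 * α) * (2 * (J * (J : ℝ) ^ (-(1 / 4) : ℝ))) := by gcongr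
      _ = _ := by ring
  calc _ ≤ 2 * D ^ 2 * (2 * (J * (N : ℝ) ^ (2 * α) * (J : ℝ) ^ (-(1 / 4) : ℝ))) := by gcongr
    _ = _ := by ring
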